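/- Let μ = (1/n)Σ_{i=1}^n δ_{x_i} and ν = (1/n)Σ_{i=1}^n δ_{y_i} with the 2n points x_1,…,x_n,y_1,…,y_n ∈ ℝ^d in general position, and suppose 2n ≤ d+1. Then: (i) for every pair of permutations (σ,τ) of {1,…,n} there exists θ ∈ S^{d−1} such that P_θ x_{σ(1)} < … < P_θ x_{σ(n)} and P_θ y_{τ(1)} < … < P_θ y_{τ(n)}; (ii) consequently minPS(μ, ν) = W_2(μ, ν). -/

import Mathlib

open MeasureTheory Filter Topology ProbabilityTheory
open scoped ENNReal RealInnerProductSpace Classical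

noncomputable section

/-- Euclidean space ℝ^d. -/
abbrev Euc (d : ℕ) : Type := EuclideanSpace ℝ (Fin d)

/-- `P2` : Borel probability measures with finite second moment. -/
def P2 {E : Type*} [NormedAddCommGroup E] [MeasurableSpace E] : Set (Measure E) :=
  {μ | IsProbabilityMeasure μ ∧ Integrable (fun x => ‖x‖ ^ 2) μ}

/-- Couplings between two measures. -/
def Coupling {E F : Type*} [MeasurableSpace E] [MeasurableSpace F]
    (μ : Measure E) (ν : Measure F) : Set (Measure (E × F)) :=
  {π | IsProbabilityMeasure π ∧ π.map Prod.fst = μ ∧ π.map Prod.snd = ν}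

/-- Quadratic transport cost of a plan. -/
def tCost {E : Type*} [NormedAddCommGroup E] [MeasurableSpace E]
    (π : Measure (E × E)) : ℝ :=
  ∫ p, ‖p.1 - p.2‖ ^ 2 ∂π

/-- Squared 2-Wasserstein distance. -/
def W2sq {E : Type*} [NormedAddCommGroup E] [MeasurableSpace E] (μ ν : Measure E) : ℝ :=
  sInf (tCost '' Coupling μ ν)

/-- 2-Wasserstein distance. -/
def W2 {E : Type*} [NormedAddCommGroup E] [MeasurableSpace E] (μ ν : Measure E) : ℝ :=
  Real.sqrt (W2sq μ ν)

/-- Optimal transport plans for the quadratic cost. -/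
def OptPlan {E : Type*} [NormedAddCommGroup E] [MeasurableSpace E]
    (μ ν : Measure E) : Set (Measure (E × E)) :=
  {π | π ∈ Coupling μ ν ∧ tCost π = W2sq μ ν}

/-- `Gamma ν μ1 μ2` : probability measures on `E × E × E` whose (1,2)-marginal is an optimal
plan between `ν` and `μ1` and whose (1,3)-marginal is an optimal plan between `ν` and `μ2`. -/
def Gamma {E : Type*} [NormedAddCommGroup E] [MeasurableSpace E]
    (ν μ1 μ2 : Measure E) : Set (Measure (E × E × E)) :=
  {ρ | IsProbabilityMeasure ρ ∧
    ρ.map (fun p => (p.1, p.2.1)) ∈ OptPlan ν μ1 ∧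
    ρ.map (fun p => (p.1, p.2.2)) ∈ OptPlan ν μ2}

/-- Cost `∫ ‖x1 − x2‖² dρ(y, x1, x2)` of a 3-plan. -/
def pivotCost {E : Type*} [NormedAddCommGroup E] [MeasurableSpace E]
    (ρ : Measure (E × E × E)) : ℝ :=
  ∫ p, ‖p.2.1 - p.2.2‖ ^ 2 ∂ρ

/-- Squared ν-based Wasserstein discrepancy. -/
def Wnusq {E : Type*} [NormedAddCommGroup E] [MeasurableSpace E]
    (ν μ1 μ2 : Measure E) : ℝ :=
  sInf (pivotCost '' Gamma ν μ1 μ2)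

/-- ν-based Wasserstein discrepancy. -/
def Wnu {E : Type*} [NormedAddCommGroup E] [MeasurableSpace E]
    (ν μ1 μ2 : Measure E) : ℝ :=
  Real.sqrt (Wnusq ν μ1 μ2)

/-- Weak convergence of a sequence of measures (against bounded continuous functions). -/
def WeakConv {E : Type*} [MeasurableSpace E] [TopologicalSpace E]
    (μs : ℕ → Measure E) (μ : Measure E) : Prop :=
  ∀ f : BoundedContinuousFunction E ℝ,
    Tendsto (fun n => ∫ x, f x ∂(μs n)) atTop (𝓝 (∫ x, f x ∂μ))

/-- Quantile function (pseudo-inverse c.d.f.) of a measure on ℝ. -/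
def quantile (ν : Measure ℝ) (t : ℝ) : ℝ :=
  sInf {s : ℝ | ENNReal.ofReal t ≤ ν (Set.Iic s)}

/-- Pushforward of `μ` by the projection `P_θ : x ↦ ⟪θ, x⟫`. -/
def projLine {d : ℕ} (θ : Euc d) (μ : Measure (Euc d)) : Measure ℝ :=
  μ.map (fun x => ⟪θ, x⟫)

/-- `μ_θ[μ1, μ2]` : the (unique) Wasserstein mean of `Q_θ#μ1` and `Q_θ#μ2`, given by the
explicit quantile formula `[(½ F_{ν1}^{[-1]} + ½ F_{ν2}^{[-1]})·θ]#L_{[0,1]}`. -/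
def pivotMiddle {d : ℕ} (θ : Euc d) (μ1 μ2 : Measure (Euc d)) : Measure (Euc d) :=
  (volume.restrict (Set.Icc (0 : ℝ) 1)).map
    (fun t => ((1 / 2) * quantile (projLine θ μ1) t
      + (1 / 2) * quantile (projLine θ μ2) t) • θ)

/-- Squared Pivot Sliced discrepancy. -/
def PSsq {d : ℕ} (θ : Euc d) (μ1 μ2 : Measure (Euc d)) : ℝ :=
  Wnusq (pivotMiddle θ μ1 μ2) μ1 μ2

/-- Pivot Sliced discrepancy. -/
def PS {d : ℕ} (θ : Euc d) (μ1 μ2 : Measure (Euc d)) : ℝ :=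
  Real.sqrt (PSsq θ μ1 μ2)

/-- `π_θ[μ1, μ2]` : the unique optimal 1D plan between `P_θ#μ1` and `P_θ#μ2`
(co-monotone quantile coupling). -/
def piTheta {d : ℕ} (θ : Euc d) (μ1 μ2 : Measure (Euc d)) : Measure (ℝ × ℝ) :=
  (volume.restrict (Set.Icc (0 : ℝ) 1)).map
    (fun t => (quantile (projLine θ μ1) t, quantile (projLine θ μ2) t))

/-- `Ω_θ(μ1, μ2)` : couplings of `μ1, μ2` whose projection by `(P_θ, P_θ)` is `π_θ[μ1, μ2]`. -/
def OmegaTheta {d : ℕ} (θ : Euc d) (μ1 μ2 : Measure (Euc d)) :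
    Set (Measure (Euc d × Euc d)) :=
  {ω | ω ∈ Coupling μ1 μ2 ∧
    ω.map (fun p => (⟪θ, p.1⟫, ⟪θ, p.2⟫)) = piTheta θ μ1 μ2}

/-- Squared constrained Wasserstein discrepancy `CW_θ²`. -/
def CWsq {d : ℕ} (θ : Euc d) (μ1 μ2 : Measure (Euc d)) : ℝ :=
  sInf (tCost '' OmegaTheta θ μ1 μ2)

/-- Wasserstein means: minimisers of `μ ↦ W₂²(μ1, μ) + W₂²(μ, μ2)` over `P2`. -/
def WMean {d : ℕ} (μ1 μ2 : Measure (Euc d)) : Set (Measure (Euc d)) :=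
  {μ | μ ∈ (P2 : Set (Measure (Euc d))) ∧
    ∀ μ' ∈ (P2 : Set (Measure (Euc d))),
      W2sq μ1 μ + W2sq μ μ2 ≤ W2sq μ1 μ' + W2sq μ' μ2}

/-- Uniform empirical measure `1/n ∑ δ_{x_i}`. -/
def empMeasure {d n : ℕ} (x : Fin n → Euc d) : Measure (Euc d) :=
  (n : ℝ≥0∞)⁻¹ • ∑ i, Measure.dirac (x i)

/-- Points indexed by `ι` are in general position: for every `1 ≤ k ≤ d`, no `k + 2` of
them lie in a `k`-dimensional affine subspace. -/
def InGeneralPosition {d : ℕ} {ι : Type*} (z : ι → Euc d) : Prop :=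
  ∀ k : ℕ, 1 ≤ k → k ≤ d → ∀ I : Finset ι, I.card = k + 2 →
    ∀ A : AffineSubspace ℝ (Euc d), Module.finrank ℝ A.direction = k →
      ¬ ∀ i ∈ I, z i ∈ A

/-- Squared Min-Pivot Sliced discrepancy. -/
def minPSsq {d : ℕ} (μ1 μ2 : Measure (Euc d)) : ℝ :=
  sInf {c : ℝ | ∃ θ : Euc d, ‖θ‖ = 1 ∧ c = PSsq θ μ1 μ2}

/-- Uniform measure on a finite family. -/
def emG {E : Type*} [MeasurableSpace E] {n : ℕ} (z : Fin n → E) : Measure E :=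
  (n : ℝ≥0∞)⁻¹ • ∑ i, Measure.dirac (z i)

lemma emG_map {E F : Type*} [MeasurableSpace E] [MeasurableSpace F] {n : ℕ} (z : Fin n → E)
    (f : E → F) (hf : Measurable f) : (emG z).map f = emG (fun i => f (z i)) := by
  ext s hs
  rw [Measure.map_apply hf hs]
  simp only [emG, Measure.smul_apply, Measure.finsetSum_apply]
  congr 1
  refine Finset.sum_congr rfl fun i _ => ?_
  rw [Measure.dirac_apply' _ hs, Measure.dirac_apply' _ (hf hs)]
  rfl

lemma emG_prob {E : Type*} [MeasurableSpace E] {n : ℕ} (hn : 0 < n) (z : Fin n → E) :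
    IsProbabilityMeasure (emG z) := by
  constructor
  simp only [emG, Measure.smul_apply, Measure.finsetSum_apply, measure_univ]
  simp only [Finset.sum_const, Finset.card_univ, Fintype.card_fin, smul_eq_mul, nsmul_eq_mul, mul_one]
  exact ENNReal.inv_mul_cancel (by exact_mod_cast hn.ne') (ENNReal.natCast_ne_top n)

lemma emG_integral {E : Type*} [MeasurableSpace E] [MeasurableSingletonClass E] {n : ℕ}
    (z : Fin n → E) (f : E → ℝ) : ∫ p, f p ∂(emG z) = (n : ℝ)⁻¹ * ∑ i, f (z i) := by
  rw [emG, integral_smul_measure, integral_finsetSum_measure]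
  · simp
  · intro i _
    exact integrable_dirac (by simp)

lemma emG_perm {E : Type*} [MeasurableSpace E] {n : ℕ} (z : Fin n → E) (σ : Equiv.Perm (Fin n)) :
    emG (fun i => z (σ i)) = emG z := by
  unfold emG
  rw [Equiv.sum_comp σ (fun i => Measure.dirac (z i))]

lemma birkhoff_min {n : ℕ} (M : Matrix (Fin n) (Fin n) ℝ) (hM : M ∈ doublyStochastic ℝ (Fin n))
    (c : Fin n → Fin n → ℝ) :
    ∃ σ : Equiv.Perm (Fin n), ∑ i, c i (σ i) ≤ ∑ i, ∑ j, c i j * M i j := by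
  obtain ⟨w, hw0, hw1, hwM⟩ := exists_eq_sum_perm_of_mem_doublyStochastic hM
  obtain ⟨σ, hσ⟩ := Finite.exists_min (fun σ : Equiv.Perm (Fin n) => ∑ i, c i (σ i))
  refine ⟨σ, ?_⟩
  have h1 : ∑ i, ∑ j, c i j * M i j = ∑ τ : Equiv.Perm (Fin n), w τ * ∑ i, c i (τ i) := by
    have h2 : ∀ i j, c i j * M i j = ∑ τ : Equiv.Perm (Fin n), w τ * (if τ i = j then c i j else 0) := by
      intro i j
      rw [← hwM, Matrix.sum_apply, Finset.mul_sum]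
      refine Finset.sum_congr rfl fun τ _ => ?_
      simp [Equiv.Perm.permMatrix, PEquiv.toMatrix, Equiv.toPEquiv, Matrix.smul_apply, eq_comm]
      split_ifs <;> ring
    simp_rw [h2]
    rw [Finset.sum_congr rfl fun i _ => Finset.sum_comm, Finset.sum_comm]
    refine Finset.sum_congr rfl fun τ _ => ?_
    rw [Finset.mul_sum]
    refine Finset.sum_congr rfl fun i _ => ?_
    rw [← Finset.mul_sum]
    simp
  rw [h1]
  calc ∑ i, c i (σ i) = ∑ τ : Equiv.Perm (Fin n), w τ * ∑ i, c i (σ i) := by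
        rw [← Finset.sum_mul, hw1, one_mul]
    _ ≤ _ := Finset.sum_le_sum fun τ _ => mul_le_mul_of_nonneg_left (hσ τ) (hw0 τ)

/-- splitting weights -/
def spw {E : Type*} {n : ℕ} (a : Fin n → E) (i : Fin n) (p : E) : ℝ :=
  if p = a i then ((Finset.univ.filter (fun k => a k = a i)).card : ℝ)⁻¹ else 0

lemma spw_meas {E : Type*} [MeasurableSpace E] [MeasurableSingletonClass E] {n : ℕ}
    (a : Fin n → E) (i : Fin n) : Measurable (spw a i) :=
  Measurable.ite (measurableSet_singleton (a i)) measurable_const measurable_const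

lemma spw_nonneg {E : Type*} {n : ℕ} (a : Fin n → E) (i : Fin n) (p : E) : 0 ≤ spw a i p := by
  unfold spw; split_ifs <;> positivity

lemma spw_le {E : Type*} {n : ℕ} (a : Fin n → E) (i : Fin n) (p : E) : spw a i p ≤ 1 := by
  unfold spw; split_ifs
  · exact Nat.cast_inv_le_one _
  · exact zero_le_one

lemma spw_sum {E : Type*} {n : ℕ} (a : Fin n → E) (k : Fin n) : ∑ i, spw a i (a k) = 1 := by
  unfold spw
  rw [← Finset.sum_filter]
  have : ∀ i ∈ Finset.univ.filter (fun i => a k = a i),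
      ((Finset.univ.filter (fun l => a l = a i)).card : ℝ)⁻¹
        = ((Finset.univ.filter (fun i => a k = a i)).card : ℝ)⁻¹ := by
    intro i hi
    have : a k = a i := (Finset.mem_filter.1 hi).2
    rw [← this]; simp_rw [eq_comm]
  rw [Finset.sum_congr rfl this, Finset.sum_const, nsmul_eq_mul]
  refine mul_inv_cancel₀ ?_
  have : 0 < (Finset.univ.filter (fun i => a k = a i)).card :=
    Finset.card_pos.2 ⟨k, by simp⟩
  positivity

lemma spw_sum' {E : Type*} {n : ℕ} (a : Fin n → E) (i : Fin n) : ∑ k, spw a i (a k) = 1 := by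
  unfold spw
  rw [← Finset.sum_filter, Finset.sum_const, nsmul_eq_mul]
  refine mul_inv_cancel₀ ?_
  have : 0 < (Finset.univ.filter (fun k => a k = a i)).card :=
    Finset.card_pos.2 ⟨i, by simp⟩
  positivity

lemma emG_ae {E : Type*} [MeasurableSpace E] [MeasurableSingletonClass E] {n : ℕ}
    (a : Fin n → E) : ∀ᵐ p ∂(emG a), p ∈ Set.range a := by
  have hm : MeasurableSet (Set.range a) := (Set.finite_range a).measurableSet
  rw [ae_iff]
  change emG a (Set.range a)ᶜ = 0
  simp only [emG, Measure.smul_apply, Measure.finsetSum_apply]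
  rw [Finset.sum_eq_zero]
  · simp
  · intro i _
    rw [Measure.dirac_apply' _ hm.compl]
    simp

lemma coupling_cost {d n : ℕ} (hn : 0 < n) (a b : Fin n → Euc d) (π : Measure (Euc d × Euc d))
    (hπ : π ∈ Coupling (emG a) (emG b)) :
    ∃ σ : Equiv.Perm (Fin n), (n : ℝ)⁻¹ * ∑ i, ‖a i - b (σ i)‖ ^ 2 ≤ tCost π := by
  obtain ⟨hp, h1, h2⟩ := hπ
  have hn' : (n : ℝ) ≠ 0 := by exact_mod_cast hn.ne'
  have hA : ∀ᵐ p ∂π, p.1 ∈ Set.range a := by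
    have := emG_ae a
    rw [← h1] at this
    exact ae_of_ae_map measurable_fst.aemeasurable this
  have hB : ∀ᵐ p ∂π, p.2 ∈ Set.range b := by
    have := emG_ae b
    rw [← h2] at this
    exact ae_of_ae_map measurable_snd.aemeasurable this
  have hint : ∀ i j, Integrable (fun p : Euc d × Euc d => spw a i p.1 * spw b j p.2) π := by
    intro i j
    refine Integrable.of_bound (C := 1) ?_ ?_
    · exact (((spw_meas a i).comp measurable_fst).mul
        ((spw_meas b j).comp measurable_snd)).aestronglyMeasurable
    · refine ae_of_all _ fun p => ?_
      rw [Real.norm_of_nonneg (mul_nonneg (spw_nonneg _ _ _) (spw_nonneg _ _ _))]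
      exact mul_le_one₀ (spw_le _ _ _) (spw_nonneg _ _ _) (spw_le _ _ _)
  let M : Matrix (Fin n) (Fin n) ℝ := fun i j => n * ∫ p, spw a i p.1 * spw b j p.2 ∂π
  have hia : ∀ i, ∫ p, spw a i p.1 ∂π = (n : ℝ)⁻¹ := by
    intro i
    rw [← integral_map (f := spw a i) measurable_fst.aemeasurable
      (spw_meas a i).aestronglyMeasurable, h1, emG_integral, spw_sum', mul_one]
  have hib : ∀ i, ∫ p, spw b i p.2 ∂π = (n : ℝ)⁻¹ := by
    intro i
    rw [← integral_map (f := spw b i) measurable_snd.aemeasurable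
      (spw_meas b i).aestronglyMeasurable, h2, emG_integral, spw_sum', mul_one]
  have hM : M ∈ doublyStochastic ℝ (Fin n) := by
    rw [mem_doublyStochastic_iff_sum]
    refine ⟨fun i j => ?_, fun i => ?_, fun j => ?_⟩
    · exact mul_nonneg (Nat.cast_nonneg _) (integral_nonneg fun p =>
        mul_nonneg (spw_nonneg _ _ _) (spw_nonneg _ _ _))
    · simp only [M]
      rw [← Finset.mul_sum, ← integral_finsetSum _ (fun j _ => hint i j)]
      have : ∫ p, ∑ j, spw a i p.1 * spw b j p.2 ∂π = ∫ p, spw a i p.1 ∂π := by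
        refine integral_congr_ae ?_
        filter_upwards [hB] with p ⟨k, hk⟩
        rw [← Finset.mul_sum, ← hk, spw_sum, mul_one]
      rw [this, hia, mul_inv_cancel₀ hn']
    · simp only [M]
      rw [← Finset.mul_sum, ← integral_finsetSum _ (fun i _ => hint i j)]
      have : ∫ p, ∑ i, spw a i p.1 * spw b j p.2 ∂π = ∫ p, spw b j p.2 ∂π := by
        refine integral_congr_ae ?_
        filter_upwards [hA] with p ⟨k, hk⟩
        rw [← Finset.sum_mul, ← hk, spw_sum, one_mul]
      rw [this, hib, mul_inv_cancel₀ hn']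
  obtain ⟨σ, hσ⟩ := birkhoff_min M hM (fun i j => ‖a i - b j‖ ^ 2)
  refine ⟨σ, ?_⟩
  have hc : tCost π = (n : ℝ)⁻¹ * ∑ i, ∑ j, ‖a i - b j‖ ^ 2 * M i j := by
    have e1 : tCost π = ∫ p, ∑ i, ∑ j, ‖a i - b j‖ ^ 2 * (spw a i p.1 * spw b j p.2) ∂π := by
      refine integral_congr_ae ?_
      filter_upwards [hA, hB] with p ⟨k, hk⟩ ⟨l, hl⟩
      have : ∀ i j, ‖a i - b j‖ ^ 2 * (spw a i p.1 * spw b j p.2)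
          = ‖p.1 - p.2‖ ^ 2 * (spw a i p.1 * spw b j p.2) := by
        intro i j
        by_cases ha : p.1 = a i
        · by_cases hb : p.2 = b j
          · rw [ha, hb]
          · simp [spw, hb]
        · simp [spw, ha]
      simp_rw [this, ← Finset.mul_sum]
      rw [← hl, spw_sum, ← hk]
      simp only [mul_one]
      rw [spw_sum, mul_one]
    rw [e1, integral_finsetSum _ (fun i _ => integrable_finsetSum _ fun j _ => (hint i j).const_mul _),
      Finset.mul_sum]
    refine Finset.sum_congr rfl fun i _ => ?_
    rw [integral_finsetSum _ (fun j _ => (hint i j).const_mul _), Finset.mul_sum]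
    refine Finset.sum_congr rfl fun j _ => ?_
    rw [integral_const_mul]
    simp only [M]
    field_simp
  rw [hc]
  exact mul_le_mul_of_nonneg_left hσ (by positivity)

lemma exists_functional {ι V : Type*} [AddCommGroup V] [Module ℝ V] (z : ι → V)
    (h : LinearIndependent ℝ z) (v : ι → ℝ) : ∃ φ : V →ₗ[ℝ] ℝ, ∀ i, φ (z i) = v i := by
  obtain ⟨φ, hφ⟩ := LinearMap.exists_extend ((Module.Basis.span h).constr ℝ v)
  refine ⟨φ, fun i => ?_⟩
  have := congrArg (fun f => f (Module.Basis.span h i)) hφ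
  simp only [LinearMap.comp_apply, Module.Basis.constr_basis] at this
  rw [← this, Submodule.subtype_apply, Module.Basis.span_apply]

lemma exists_superspace {V : Type*} [AddCommGroup V] [Module ℝ V] [FiniteDimensional ℝ V]
    (W : Submodule ℝ V) (k : ℕ) (h1 : Module.finrank ℝ W ≤ k) (h2 : k ≤ Module.finrank ℝ V) :
    ∃ U : Submodule ℝ V, W ≤ U ∧ Module.finrank ℝ U = k := by
  induction k, h1 using Nat.le_induction with
  | base => exact ⟨W, le_rfl, rfl⟩
  | succ k hk ih =>
    obtain ⟨U, hU, hUk⟩ := ih (by omega)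
    have hne : U ≠ ⊤ := by
      rintro rfl
      rw [finrank_top] at hUk
      omega
    obtain ⟨v, hv⟩ : ∃ v, v ∉ U := by
      by_contra hcon
      push Not at hcon
      exact hne (Submodule.eq_top_iff'.2 hcon)
    refine ⟨U ⊔ Submodule.span ℝ {v}, hU.trans le_sup_left, ?_⟩
    have hv0 : v ≠ 0 := by rintro rfl; exact hv U.zero_mem
    have e := Submodule.finrank_sup_add_finrank_inf_eq U (Submodule.span ℝ {v})
    have hd : U ⊓ Submodule.span ℝ {v} = ⊥ := by
      rw [← disjoint_iff]
      exact (Submodule.disjoint_span_singleton' hv0).2 hv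
    rw [hd, finrank_bot, finrank_span_singleton hv0] at e
    omega

lemma tCost_nonneg {d : ℕ} (π : Measure (Euc d × Euc d)) : 0 ≤ tCost π :=
  integral_nonneg fun p => by positivity

lemma tCost_bdd {d : ℕ} (S : Set (Measure (Euc d × Euc d))) : BddBelow (tCost '' S) :=
  ⟨0, by rintro _ ⟨π, _, rfl⟩; exact tCost_nonneg π⟩

lemma pivotCost_bdd {d : ℕ} (S : Set (Measure (Euc d × Euc d × Euc d))) :
    BddBelow (pivotCost '' S) :=
  ⟨0, by rintro _ ⟨π, _, rfl⟩; exact integral_nonneg fun p => by positivity⟩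

lemma diag_coupling {d n : ℕ} (hn : 0 < n) (a b : Fin n → Euc d) :
    emG (fun i => (a i, b i)) ∈ Coupling (emG a) (emG b) :=
  ⟨emG_prob hn _, emG_map _ _ measurable_fst, emG_map _ _ measurable_snd⟩

lemma diag_opt {d n : ℕ} (hn : 0 < n) (a b : Fin n → Euc d)
    (h : ∀ σ : Equiv.Perm (Fin n), ∑ i, ‖a i - b i‖ ^ 2 ≤ ∑ i, ‖a i - b (σ i)‖ ^ 2) :
    emG (fun i => (a i, b i)) ∈ OptPlan (emG a) (emG b) := by
  refine ⟨diag_coupling hn a b, le_antisymm ?_ ?_⟩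
  · refine le_csInf ⟨_, _, diag_coupling hn a b, rfl⟩ ?_
    rintro _ ⟨π, hπ, rfl⟩
    obtain ⟨σ, hσ⟩ := coupling_cost hn a b π hπ
    refine le_trans ?_ hσ
    rw [tCost, emG_integral]
    exact mul_le_mul_of_nonneg_left (h σ) (by positivity)
  · exact csInf_le (tCost_bdd _) ⟨_, diag_coupling hn a b, rfl⟩

lemma sorted_opt {d n : ℕ} (hn : 0 < n) (θ : Euc d) (m : Fin n → ℝ) (b : Fin n → Euc d)
    (hm : Monotone m) (hb : Monotone (fun i => (⟪θ, b i⟫ : ℝ))) :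
    emG (fun i => (m i • θ, b i)) ∈ OptPlan (emG (fun i => m i • θ)) (emG b) := by
  refine diag_opt hn _ _ fun σ => ?_
  have key := (hm.monovary hb).sum_mul_comp_perm_le_sum_mul (σ := σ)
  have e : ∀ i j, ‖m i • θ - b j‖ ^ 2 = ‖m i • θ‖ ^ 2 + ‖b j‖ ^ 2 - 2 * (m i * ⟪θ, b j⟫) := by
    intro i j
    rw [norm_sub_sq_real, real_inner_smul_left]; ring
  simp_rw [e, Finset.sum_sub_distrib, Finset.sum_add_distrib, ← Finset.mul_sum]
  rw [Equiv.sum_comp σ (fun i => ‖b i‖ ^ 2)]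
  linarith

lemma quantile_emG {n : ℕ} (hn : 0 < n) (u : Fin n → ℝ) (hu : Monotone u) (i : Fin n) (t : ℝ)
    (h1 : (i : ℝ) / n < t) (h2 : t ≤ ((i : ℕ) + 1 : ℝ) / n) : quantile (emG u) t = u i := by
  have hn0 : (0 : ℝ) < n := by exact_mod_cast hn
  have hm : ∀ s : ℝ, emG u (Set.Iic s)
      = ENNReal.ofReal (((Finset.univ.filter (fun j => u j ≤ s)).card : ℝ) / n) := by
    intro s
    simp only [emG, Measure.smul_apply, Measure.finsetSum_apply, smul_eq_mul]
    have : ∑ j, (Measure.dirac (u j)) (Set.Iic s)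
        = ((Finset.univ.filter (fun j => u j ≤ s)).card : ℝ≥0∞) := by
      simp [Measure.dirac_apply' _ measurableSet_Iic, Set.indicator_apply]
    rw [this, ENNReal.ofReal_div_of_pos hn0, ENNReal.ofReal_natCast, ENNReal.ofReal_natCast,
      ENNReal.div_eq_inv_mul]
  have : {s : ℝ | ENNReal.ofReal t ≤ emG u (Set.Iic s)} = Set.Ici (u i) := by
    ext s
    simp only [Set.mem_ofPred_eq, Set.mem_Ici]
    rw [hm, ENNReal.ofReal_le_ofReal_iff (by positivity)]
    constructor
    · intro h
      by_contra hs
      push Not at hs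
      have hsub : Finset.univ.filter (fun j => u j ≤ s) ⊆ Finset.Iio i := by
        intro j hj
        have hj := (Finset.mem_filter.1 hj).2
        rw [Finset.mem_Iio]
        by_contra hij
        have := hu (not_lt.1 hij)
        linarith
      have hc := Finset.card_le_card hsub
      rw [Fin.card_Iio] at hc
      have : ((Finset.univ.filter (fun j => u j ≤ s)).card : ℝ) / n ≤ (i : ℝ) / n := by
        gcongr
      linarith
    · intro h
      have hsub : Finset.Iic i ⊆ Finset.univ.filter (fun j => u j ≤ s) := by
        intro j hj
        rw [Finset.mem_Iic] at hj
        simp only [Finset.mem_filter, Finset.mem_univ, true_and]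
        exact (hu hj).trans h
      have hc := Finset.card_le_card hsub
      rw [Fin.card_Iic] at hc
      refine h2.trans ?_
      gcongr
      exact_mod_cast hc
  rw [quantile, this, csInf_Ici]

lemma map_step {E : Type*} [MeasurableSpace E] {n : ℕ} (hn : 0 < n) (g : ℝ → E) (z : Fin n → E)
    (hg : ∀ i : Fin n, ∀ t : ℝ, (i : ℝ) / n < t → t ≤ ((i : ℕ) + 1 : ℝ) / n → g t = z i) :
    (volume.restrict (Set.Icc (0 : ℝ) 1)).map g = emG z := by
  have hn0 : (0 : ℝ) < n := by exact_mod_cast hn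
  let I : Fin n → Set ℝ := fun i => Set.Ioc ((i : ℝ) / n) (((i : ℕ) + 1 : ℝ) / n)
  have hU : Set.Ioc (0 : ℝ) 1 = ⋃ i, I i := by
    ext t
    simp only [Set.mem_iUnion, I, Set.mem_Ioc]
    constructor
    · rintro ⟨h0, h1⟩
      have hp : 0 < t * n := by positivity
      have hc : 0 < ⌈t * n⌉₊ := Nat.ceil_pos.2 hp
      have hle : ⌈t * n⌉₊ ≤ n := Nat.ceil_le.2 (by nlinarith)
      refine ⟨⟨⌈t * n⌉₊ - 1, by omega⟩, ?_, ?_⟩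
      · rw [div_lt_iff₀ hn0]
        exact Nat.lt_ceil.1 (by simp; omega)
      · rw [le_div_iff₀ hn0]
        refine (Nat.le_ceil _).trans ?_
        have : ⌈t * n⌉₊ = ⌈t * n⌉₊ - 1 + 1 := by omega
        exact_mod_cast this.le
    · rintro ⟨i, h0, h1⟩
      refine ⟨lt_of_le_of_lt (by positivity) h0, h1.trans ?_⟩
      rw [div_le_one hn0]
      exact_mod_cast i.2
  have hd : Pairwise (Function.onFun Disjoint I) := by
    intro i j hij
    rw [Function.onFun, Set.disjoint_left]
    rintro t ⟨h1, h2⟩ ⟨h3, h4⟩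
    apply hij
    have a1 := h1.trans_le h4
    have a2 := h3.trans_le h2
    rw [div_lt_div_iff_of_pos_right hn0] at a1 a2
    have a1' : (i : ℕ) < (j : ℕ) + 1 := by exact_mod_cast a1
    have a2' : (j : ℕ) < (i : ℕ) + 1 := by exact_mod_cast a2
    ext; omega
  have hc : ∀ i, g =ᵐ[volume.restrict (I i)] fun _ => z i := by
    intro i
    filter_upwards [ae_restrict_mem measurableSet_Ioc] with t ht
    exact hg i t ht.1 ht.2
  have hae : ∀ i, AEMeasurable g (volume.restrict (I i)) := fun i =>
    (aemeasurable_const).congr (hc i).symm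
  rw [← restrict_Ioc_eq_restrict_Icc, hU, Measure.restrict_iUnion hd (fun i => measurableSet_Ioc),
    Measure.map_sum (aemeasurable_sum_measure_iff.2 hae), Measure.sum_fintype, emG, Finset.smul_sum]
  refine Finset.sum_congr rfl fun i _ => ?_
  rw [Measure.map_congr (hc i), Measure.map_const]
  congr 1
  simp only [I, Measure.restrict_apply_univ, Real.volume_Ioc]
  rw [← sub_div, add_sub_cancel_left, one_div, ENNReal.ofReal_inv_of_pos hn0, ENNReal.ofReal_natCast]

lemma pivotMiddle_eq {d n : ℕ} (hn : 0 < n) (θ : Euc d) (a b : Fin n → Euc d)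
    (ha : Monotone (fun i => (⟪θ, a i⟫ : ℝ))) (hb : Monotone (fun i => (⟪θ, b i⟫ : ℝ))) :
    pivotMiddle θ (emG a) (emG b) =
      emG (fun i => ((1 / 2) * (⟪θ, a i⟫ : ℝ) + (1 / 2) * (⟪θ, b i⟫ : ℝ)) • θ) := by
  have hmeas : Measurable (fun x : Euc d => (⟪θ, x⟫ : ℝ)) := by fun_prop
  unfold pivotMiddle
  refine map_step hn _ _ fun i t h1 h2 => ?_
  simp only [projLine]
  rw [emG_map _ _ hmeas, emG_map _ _ hmeas, quantile_emG hn _ ha i t h1 h2,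
    quantile_emG hn _ hb i t h1 h2]

lemma mem_Gamma {d n : ℕ} (hn : 0 < n) (θ : Euc d) (a b : Fin n → Euc d)
    (ha : Monotone (fun i => (⟪θ, a i⟫ : ℝ))) (hb : Monotone (fun i => (⟪θ, b i⟫ : ℝ))) :
    emG (fun i => (((1 / 2) * (⟪θ, a i⟫ : ℝ) + (1 / 2) * (⟪θ, b i⟫ : ℝ)) • θ, a i, b i)) ∈
      Gamma (pivotMiddle θ (emG a) (emG b)) (emG a) (emG b) := by
  rw [pivotMiddle_eq hn θ a b ha hb]
  have hm : Monotone (fun i => (1 / 2) * (⟪θ, a i⟫ : ℝ) + (1 / 2) * (⟪θ, b i⟫ : ℝ)) := by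
    intro i j hij
    have := ha hij
    have := hb hij
    simp only at *
    linarith
  refine ⟨emG_prob hn _, ?_, ?_⟩
  · rw [emG_map _ _ (by fun_prop)]
    exact sorted_opt hn θ _ a hm ha
  · rw [emG_map _ _ (by fun_prop)]
    exact sorted_opt hn θ _ b hm hb

lemma W2sq_le_pivotCost {d : ℕ} (ν μ1 μ2 : Measure (Euc d)) (ρ : Measure (Euc d × Euc d × Euc d))
    (hρ : ρ ∈ Gamma ν μ1 μ2) : W2sq μ1 μ2 ≤ pivotCost ρ := by
  obtain ⟨hp, ⟨⟨_, _, h1⟩, _⟩, ⟨⟨_, _, h2⟩, _⟩⟩ := hρ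
  refine csInf_le (tCost_bdd _) ⟨ρ.map Prod.snd, ⟨?_, ?_, ?_⟩, ?_⟩
  · exact Measure.isProbabilityMeasure_map measurable_snd.aemeasurable
  · rw [← h1, Measure.map_map (by fun_prop) (by fun_prop),
      Measure.map_map (by fun_prop) (by fun_prop)]
    rfl
  · rw [← h2, Measure.map_map (by fun_prop) (by fun_prop),
      Measure.map_map (by fun_prop) (by fun_prop)]
    rfl
  · rw [tCost, pivotCost, integral_map (by fun_prop)]
    exact (by fun_prop : Measurable fun p : Euc d × Euc d => ‖p.1 - p.2‖ ^ 2).aestronglyMeasurable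

lemma W2sq_le_PSsq {d n : ℕ} (hn : 0 < n) (θ : Euc d) (x y : Fin n → Euc d) :
    W2sq (emG x) (emG y) ≤ PSsq θ (emG x) (emG y) := by
  have hne : (Gamma (pivotMiddle θ (emG x) (emG y)) (emG x) (emG y)).Nonempty := by
    have h := mem_Gamma hn θ (fun i => x (Tuple.sort (fun i => (⟪θ, x i⟫ : ℝ)) i))
      (fun i => y (Tuple.sort (fun i => (⟪θ, y i⟫ : ℝ)) i))
      (Tuple.monotone_sort (fun i => (⟪θ, x i⟫ : ℝ)))
      (Tuple.monotone_sort (fun i => (⟪θ, y i⟫ : ℝ)))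
    rw [emG_perm x, emG_perm y] at h
    exact ⟨_, h⟩
  refine le_csInf (hne.image _) ?_
  rintro _ ⟨ρ, hρ, rfl⟩
  exact W2sq_le_pivotCost _ _ _ ρ hρ

lemma part_i {d n : ℕ} (hn : 0 < n)
    (x y : Fin n → Euc d)
    (hgen : InGeneralPosition (Sum.elim x y))
    (hdim : 2 * n ≤ d + 1) (σ τ : Equiv.Perm (Fin n)) : ∃ θ : Euc d, ‖θ‖ = 1 ∧
      StrictMono (fun i => (⟪θ, x (σ i)⟫ : ℝ)) ∧
      StrictMono (fun i => (⟪θ, y (τ i)⟫ : ℝ)) := by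
  rcases Nat.lt_or_ge 1 n with h1 | h1
  · -- affine independence
    have hcard : Fintype.card (Fin n ⊕ Fin n) = (2 * n - 2) + 2 := by
      simp; omega
    have hai : AffineIndependent ℝ (Sum.elim x y) := by
      rw [affineIndependent_iff_not_finrank_vectorSpan_le ℝ _ hcard]
      intro hle
      obtain ⟨V, hV, hVf⟩ : ∃ V : Submodule ℝ (Euc d),
          vectorSpan ℝ (Set.range (Sum.elim x y)) ≤ V ∧ Module.finrank ℝ V = 2 * n - 2 := by
        refine exists_superspace _ _ hle ?_
        rw [finrank_euclideanSpace_fin]; omega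
      refine hgen (2 * n - 2) (by omega) (by omega) Finset.univ
        (by rw [Finset.card_univ, hcard]) (AffineSubspace.mk' (Sum.elim x y (Sum.inl ⟨0, hn⟩)) V)
        (by rw [AffineSubspace.direction_mk']; exact hVf) ?_
      intro i _
      rw [AffineSubspace.mem_mk']
      exact hV (vsub_mem_vectorSpan ℝ (Set.mem_range_self _) (Set.mem_range_self _))
    let i0 : Fin n ⊕ Fin n := Sum.inl ⟨0, hn⟩
    rw [affineIndependent_iff_linearIndependent_vsub ℝ _ i0] at hai
    let v : Fin n ⊕ Fin n → ℝ := Sum.elim (fun i => ((σ.symm i : ℕ) : ℝ)) (fun i => ((τ.symm i : ℕ) : ℝ))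
    obtain ⟨φ, hφ⟩ : ∃ φ : Euc d →ₗ[ℝ] ℝ, ∀ i : {j // j ≠ i0},
        φ (Sum.elim x y i -ᵥ Sum.elim x y i0) = v i - v i0 :=
      exists_functional _ hai (fun i => v i - v i0)
    let θ : Euc d := (InnerProductSpace.toDual ℝ (Euc d)).symm (LinearMap.toContinuousLinearMap φ)
    have hθ : ∀ z, (⟪θ, z⟫ : ℝ) = φ z := by
      intro z
      simp [θ]
    have hval : ∀ i, (⟪θ, Sum.elim x y i⟫ : ℝ) = v i + (φ (Sum.elim x y i0) - v i0) := by
      intro i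
      rw [hθ]
      by_cases hi : i = i0
      · rw [hi]; ring
      · have := hφ ⟨i, hi⟩
        rw [vsub_eq_sub, map_sub] at this
        linarith
    have hx : ∀ i, (⟪θ, x (σ i)⟫ : ℝ) = (i : ℕ) + (φ (Sum.elim x y i0) - v i0) := by
      intro i
      have := hval (Sum.inl (σ i))
      simpa [v] using this
    have hy : ∀ i, (⟪θ, y (τ i)⟫ : ℝ) = (i : ℕ) + (φ (Sum.elim x y i0) - v i0) := by
      intro i
      have := hval (Sum.inr (τ i))
      simpa [v] using this
    have hθ0 : θ ≠ 0 := by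
      intro h0
      have e0 := hx ⟨0, hn⟩
      have e1 := hx ⟨1, h1⟩
      rw [h0, inner_zero_left] at e0 e1
      simp only [Nat.cast_zero, Nat.cast_one] at e0 e1
      linarith
    have hpos : 0 < ‖θ‖⁻¹ := inv_pos.2 (norm_pos_iff.2 hθ0)
    refine ⟨‖θ‖⁻¹ • θ, ?_, ?_, ?_⟩
    · rw [norm_smul, norm_inv, norm_norm, inv_mul_cancel₀ (norm_ne_zero_iff.2 hθ0)]
    · intro i j hij
      have : ((i : ℕ) : ℝ) < ((j : ℕ) : ℝ) := by exact_mod_cast hij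
      simp only [real_inner_smul_left, hx]
      exact mul_lt_mul_of_pos_left (by linarith) hpos
    · intro i j hij
      have : ((i : ℕ) : ℝ) < ((j : ℕ) : ℝ) := by exact_mod_cast hij
      simp only [real_inner_smul_left, hy]
      exact mul_lt_mul_of_pos_left (by linarith) hpos
  · have hs : Subsingleton (Fin n) := by
      rw [← Finite.card_le_one_iff_subsingleton]; simpa using h1
    have hd : 0 < d := by omega
    refine ⟨EuclideanSpace.single ⟨0, hd⟩ 1, by simp, Subsingleton.strictMono _,
      Subsingleton.strictMono _⟩

/-- for point clouds in general position with `2n ≤ d + 1`: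
(i) every pair of permutations is realised as the sorting pair of some direction `θ`;
(ii) consequently `minPS(μ, ν) = W₂(μ, ν)`. -/
theorem minPS_eq_W2_general_position {d n : ℕ} (hn : 0 < n)
    (x y : Fin n → Euc d)
    (hgen : InGeneralPosition (Sum.elim x y))
    (hdim : 2 * n ≤ d + 1) :
    (∀ σ τ : Equiv.Perm (Fin n), ∃ θ : Euc d, ‖θ‖ = 1 ∧
      StrictMono (fun i => (⟪θ, x (σ i)⟫ : ℝ)) ∧
      StrictMono (fun i => (⟪θ, y (τ i)⟫ : ℝ))) ∧
    minPSsq (empMeasure x) (empMeasure y) = W2sq (empMeasure x) (empMeasure y) := by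
  have hi := part_i hn x y hgen hdim
  refine ⟨hi, ?_⟩
  change minPSsq (emG x) (emG y) = W2sq (emG x) (emG y)
  have hlb : ∀ c ∈ {c : ℝ | ∃ θ : Euc d, ‖θ‖ = 1 ∧ c = PSsq θ (emG x) (emG y)},
      W2sq (emG x) (emG y) ≤ c := by
    rintro _ ⟨θ, _, rfl⟩
    exact W2sq_le_PSsq hn θ x y
  apply le_antisymm
  · obtain ⟨σ, hσ⟩ := Finite.exists_min
      (fun σ : Equiv.Perm (Fin n) => ∑ i, ‖x i - y (σ i)‖ ^ 2)
    obtain ⟨θ, hθ, hx, hy⟩ := hi (Equiv.refl _) σ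
    have hmem := mem_Gamma hn θ x (fun i => y (σ i)) hx.monotone hy.monotone
    rw [emG_perm y] at hmem
    have h1 : minPSsq (emG x) (emG y) ≤ PSsq θ (emG x) (emG y) :=
      csInf_le ⟨_, hlb⟩ ⟨θ, hθ, rfl⟩
    have h2 : PSsq θ (emG x) (emG y) ≤ _ := csInf_le (pivotCost_bdd _) ⟨_, hmem, rfl⟩
    refine h1.trans (h2.trans ?_)
    refine le_csInf ⟨_, _, diag_coupling hn x y, rfl⟩ ?_
    rintro _ ⟨π, hπ, rfl⟩
    obtain ⟨τ, hτ⟩ := coupling_cost hn x y π hπ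
    refine le_trans ?_ hτ
    rw [pivotCost, emG_integral]
    exact mul_le_mul_of_nonneg_left (hσ τ) (by positivity)
  · obtain ⟨θ, hθ, _⟩ := hi (Equiv.refl _) (Equiv.refl _)
    exact le_csInf ⟨_, θ, hθ, rfl⟩ hlb

end
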